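/- arXiv:1703.10681 — 2 statements merged into one kernel-verified Lean document; each statement's English description precedes it below -/
import Mathlib

section
/- Let r ≥ 1, set α = r/(r+1) and γ = 1/r, and suppose the oracle O satisfies O(c, A') ≤ opt(A', B) ≤ r · O(c, A') for every A' ⊆ A. Let S = Greedy-OM(α, c) ∩ Greedy-TM(γ, c) with respect to the true costs c (the output of Deterministic-Large(r/(r+1), 1/r)). Then (1 + r) · v(S) + (r + 2) · v({i*}) ≥ opt(A, B). (In the large-market limit where v({i*}) is negligible compared to opt(A, B), this mechanism is therefore a (1 + r)-approximation of the optimum; with the greedy oracle achieving r = e/(e−1), this gives approximation guarantee 1 + e/(e−1) ≈ 2.58.) -/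
open Classical

/-- Marginal value `m_i(S) = v(S ∪ {i}) - v(S)`. -/
noncomputable def marg {ι : Type*} [DecidableEq ι] (v : Finset ι → ℝ) (S : Finset ι) (i : ι) : ℝ :=
  v (insert i S) - v S

/-- The next agent in the greedy order once the set `S` has been selected:
an agent of `Sᶜ` maximizing marginal value over bid, ties broken by the fixed linear order. -/
noncomputable def pick {ι : Type*} [Fintype ι] [LinearOrder ι] [Nonempty ι]
    (v : Finset ι → ℝ) (b : ι → ℝ) (S : Finset ι) : ι :=
  if h : Sᶜ.Nonempty then
    (Sᶜ.filter fun j => ∀ j' ∈ Sᶜ, marg v S j' / b j' ≤ marg v S j / b j).min'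
      (by
        obtain ⟨j, hj, hmax⟩ := Finset.exists_max_image Sᶜ (fun j => marg v S j / b j) h
        exact ⟨j, Finset.mem_filter.mpr ⟨hj, hmax⟩⟩)
  else Classical.arbitrary ι

/-- `greedySet v b t` is the set `S_t` of the first `t` agents in the greedy order
computed with respect to the bid vector `b`. -/
noncomputable def greedySet {ι : Type*} [Fintype ι] [LinearOrder ι] [Nonempty ι]
    (v : Finset ι → ℝ) (b : ι → ℝ) : ℕ → Finset ι
  | 0 => ∅
  | t + 1 => insert (pick v b (greedySet v b t)) (greedySet v b t)

/-- `agent v b k` is the `k`-th agent `a_k` in the greedy order (1-indexed). -/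
noncomputable def agent {ι : Type*} [Fintype ι] [LinearOrder ι] [Nonempty ι]
    (v : Finset ι → ℝ) (b : ι → ℝ) (k : ℕ) : ι :=
  pick v b (greedySet v b (k - 1))

/-- `optVal v b B A'` is the maximum of `v S` over `S ⊆ A'` with `∑_{i ∈ S} b i ≤ B`. -/
noncomputable def optVal {ι : Type*} (v : Finset ι → ℝ) (b : ι → ℝ) (B : ℝ)
    (A' : Finset ι) : ℝ :=
  sSup (v '' {S : Finset ι | S ⊆ A' ∧ ∑ i ∈ S, b i ≤ B})

/-- The greedy threshold mechanism `Greedy-TM(γ, b)`: it outputs `S_{k-1}` where `k` is the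
least index with `b_{a_k} · v(S_k) > γ · B · m_{a_k}(S_{k-1})`, and all of `A` if no such `k`
exists. -/
noncomputable def greedyTM {ι : Type*} [Fintype ι] [LinearOrder ι] [Nonempty ι]
    (v : Finset ι → ℝ) (B γ : ℝ) (b : ι → ℝ) : Finset ι :=
  if h : ∃ k, (1 ≤ k ∧ k ≤ Fintype.card ι) ∧
      b (agent v b k) * v (greedySet v b k) >
        γ * B * marg v (greedySet v b (k - 1)) (agent v b k)
  then greedySet v b (Nat.find h - 1)
  else Finset.univ

/-- The exponential-time greedy oracle mechanism `Greedy-EOM(α, b)`: it outputs `S_{k-1}` where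
`k` is the least index with `v(S_k) > α · opt_b(A, B)`, and all of `A` if no such `k` exists. -/
noncomputable def greedyEOM {ι : Type*} [Fintype ι] [LinearOrder ι] [Nonempty ι]
    (v : Finset ι → ℝ) (B α : ℝ) (b : ι → ℝ) : Finset ι :=
  if h : ∃ k, (1 ≤ k ∧ k ≤ Fintype.card ι) ∧
      v (greedySet v b k) > α * optVal v b B Finset.univ
  then greedySet v b (Nat.find h - 1)
  else Finset.univ

/-- The greedy oracle mechanism `Greedy-OM(α, b)` with oracle `O`: it outputs
`{ a_t : 1 ≤ t ≤ n, v(S_t) ≤ α · O(b, A \ {a_t}) }`. -/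
noncomputable def greedyOM {ι : Type*} [Fintype ι] [LinearOrder ι] [Nonempty ι]
    (v : Finset ι → ℝ) (O : (ι → ℝ) → Finset ι → ℝ) (α : ℝ) (b : ι → ℝ) : Finset ι :=
  ((Finset.Icc 1 (Fintype.card ι)).filter
      (fun t => v (greedySet v b t) ≤ α * O b (Finset.univ.erase (agent v b t)))).image
    (fun t => agent v b t)

/-- An allocation rule `f`, mapping bid vectors with positive entries to subsets of the agents,
is monotone if a winner remains a winner after lowering his bid. -/
def MonotoneAlloc {ι : Type*} [DecidableEq ι] (f : (ι → ℝ) → Finset ι) : Prop :=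
  ∀ b : ι → ℝ, (∀ j, 0 < b j) → ∀ i ∈ f b, ∀ β : ℝ, 0 < β → β ≤ b i →
    i ∈ f (Function.update b i β)

/-!
An agent wins if it passes the oracle test and precedes, in the greedy order, every agent that fails
the threshold test. So the winning set contains the greedy prefix `S` preceding the first agent `i`
that fails either test.

* If `i` fails the threshold test, its marginal value per unit of cost is at most
  `γ⁻¹ * v (S ∪ {i}) / B`. The greedy rule makes this a bound for every remaining agent, so by
  submodularity a budget-feasible set adds at most `γ⁻¹ * v (S ∪ {i})` to `S`.
* If `i` fails the oracle test, then `v (S ∪ {i})` exceeds `α * O (A ∖ {i})`, hence a fixed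
  fraction of the optimum without `i`, and removing `i` costs the optimum at most `v {i}`.

In both cases `v (S ∪ {i}) ≤ v S + v {i}` bounds the optimum in terms of `v S` and the value of a
single agent. The parameters `α = r / (r + 1)` and `γ = 1 / r` make the factor in front of `v S`
equal to `1 + r` in both cases.
-/

theorem map_nonneg_of_monotone {ι : Type*} {v : Finset ι → ℝ} (hmono : Monotone v)
    (hv : 0 ≤ v ∅) (S : Finset ι) : 0 ≤ v S :=
  hv.trans (hmono S.empty_subset)

section Submodular

variable {ι : Type*} [DecidableEq ι] {v : Finset ι → ℝ}

/-- Submodularity of a set function on finite sets, in its lattice form. -/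
def IsSubmodular (v : Finset ι → ℝ) : Prop :=
  ∀ S T : Finset ι, v (S ∪ T) + v (S ∩ T) ≤ v S + v T

theorem marg_nonneg (hmono : Monotone v) (S : Finset ι) (i : ι) : 0 ≤ marg v S i :=
  sub_nonneg.2 (hmono (Finset.subset_insert i S))

theorem marg_eq_zero_of_mem {S : Finset ι} {i : ι} (hi : i ∈ S) : marg v S i = 0 := by
  rw [marg, Finset.insert_eq_of_mem hi, sub_self]

theorem IsSubmodular.map_insert_le (hsub : IsSubmodular v) (hmono : Monotone v) (hv : 0 ≤ v ∅)
    (i : ι) (S : Finset ι) : v (insert i S) ≤ v S + v {i} := by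
  have h_inter : v ∅ ≤ v ({i} ∩ S) := hmono (Finset.empty_subset _)
  have h_union := hsub {i} S
  rw [← Finset.insert_eq] at h_union
  linarith

theorem IsSubmodular.map_union_le_add_sum_marg (hsub : IsSubmodular v) (S T : Finset ι) :
    v (S ∪ T) ≤ v S + ∑ j ∈ T, marg v S j := by
  induction T using Finset.induction_on with
  | empty => simp
  | insert a T ha ih =>
    have h_union : S ∪ T ∪ insert a S = S ∪ insert a T := by grind
    have h_inter : (S ∪ T) ∩ insert a S = S := by grind
    have h := hsub (S ∪ T) (insert a S)
    rw [h_union, h_inter] at h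
    rw [Finset.sum_insert ha, marg]
    linarith

end Submodular

section Optimum

variable {ι : Type*} {v : Finset ι → ℝ} {b : ι → ℝ} {B : ℝ} {A : Finset ι}

theorem le_optVal {S : Finset ι} (hSA : S ⊆ A) (hSB : ∑ i ∈ S, b i ≤ B) :
    v S ≤ optVal v b B A := by
  have hfin : {S : Finset ι | S ⊆ A ∧ ∑ i ∈ S, b i ≤ B}.Finite :=
    A.powerset.finite_toSet.subset fun T hT => Finset.mem_powerset.2 hT.1
  exact le_csSup (hfin.image v).bddAbove ⟨S, ⟨hSA, hSB⟩, rfl⟩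

theorem optVal_le (hB : 0 ≤ B) {x : ℝ} (h : ∀ S ⊆ A, ∑ i ∈ S, b i ≤ B → v S ≤ x) :
    optVal v b B A ≤ x := by
  refine csSup_le ⟨v ∅, ∅, ⟨A.empty_subset, by simpa using hB⟩, rfl⟩ ?_
  rintro _ ⟨S, ⟨hSA, hSB⟩, rfl⟩
  exact h S hSA hSB

theorem optVal_le_map (hmono : Monotone v) (hB : 0 ≤ B) : optVal v b B A ≤ v A :=
  optVal_le hB fun _ hSA _ => hmono hSA

theorem optVal_le_optVal_erase_add [DecidableEq ι] (hsub : IsSubmodular v) (hmono : Monotone v)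
    (hv : 0 ≤ v ∅) (hb : ∀ i, 0 ≤ b i) (hB : 0 ≤ B) (i : ι) :
    optVal v b B A ≤ optVal v b B (A.erase i) + v {i} := by
  refine optVal_le hB fun T hTA hTB => ?_
  have h_cost : ∑ j ∈ T.erase i, b j ≤ B :=
    (Finset.sum_le_sum_of_subset_of_nonneg (T.erase_subset i) fun j _ _ => hb j).trans hTB
  calc v T ≤ v (insert i (T.erase i)) := hmono (Finset.subset_insert_iff.2 subset_rfl)
    _ ≤ v (T.erase i) + v {i} := hsub.map_insert_le hmono hv _ _
    _ ≤ optVal v b B (A.erase i) + v {i} := by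
      gcongr
      exact le_optVal (Finset.erase_subset_erase i hTA) h_cost

theorem optVal_le_of_optVal_erase_le [DecidableEq ι] (hsub : IsSubmodular v)
    (hmono : Monotone v) (hv : 0 ≤ v ∅) (hb : ∀ i, 0 ≤ b i) (hB : 0 ≤ B) {K : ℝ} (hK : 0 ≤ K)
    {S : Finset ι} {i : ι} (h : optVal v b B (A.erase i) ≤ K * v (insert i S)) :
    optVal v b B A ≤ K * v S + (K + 1) * v {i} :=
  calc optVal v b B A ≤ optVal v b B (A.erase i) + v {i} :=
        optVal_le_optVal_erase_add hsub hmono hv hb hB i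
    _ ≤ K * (v S + v {i}) + v {i} := by
      grw [h, hsub.map_insert_le hmono hv]
    _ = K * v S + (K + 1) * v {i} := by ring

end Optimum

section Greedy

variable {ι : Type*} [Fintype ι] [LinearOrder ι] [Nonempty ι] {v : Finset ι → ℝ} {b : ι → ℝ}

theorem pick_mem_filter {S : Finset ι} (hS : Sᶜ.Nonempty) :
    pick v b S ∈ Sᶜ.filter fun j => ∀ j' ∈ Sᶜ, marg v S j' / b j' ≤ marg v S j / b j := by
  rw [pick, dif_pos hS]
  exact Finset.min'_mem _ _

theorem pick_notMem {S : Finset ι} (hS : Sᶜ.Nonempty) : pick v b S ∉ S :=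
  Finset.mem_compl.1 (Finset.mem_filter.1 (pick_mem_filter hS)).1

theorem marg_div_le_marg_pick_div {S : Finset ι} {j : ι} (hj : j ∉ S) :
    marg v S j / b j ≤ marg v S (pick v b S) / b (pick v b S) :=
  have hj : j ∈ Sᶜ := Finset.mem_compl.2 hj
  (Finset.mem_filter.1 (pick_mem_filter ⟨j, hj⟩)).2 j hj

theorem greedySet_succ (t : ℕ) :
    greedySet v b (t + 1) = insert (agent v b (t + 1)) (greedySet v b t) :=
  rfl

theorem greedySet_monotone : Monotone (greedySet v b) :=
  monotone_nat_of_le_succ fun _ => Finset.subset_insert _ _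

theorem card_greedySet {t : ℕ} (ht : t ≤ Fintype.card ι) : (greedySet v b t).card = t := by
  induction t with
  | zero => rfl
  | succ t ih =>
    have h_card : (greedySet v b t).card = t := ih (by lia)
    have h_compl : (greedySet v b t)ᶜ.Nonempty := by
      rw [← Finset.card_pos, Finset.card_compl]
      lia
    rw [greedySet, Finset.card_insert_of_notMem (pick_notMem h_compl), h_card]

theorem greedySet_card : greedySet v b (Fintype.card ι) = Finset.univ :=
  (Finset.card_eq_iff_eq_univ _).1 (card_greedySet le_rfl)

theorem optVal_le_add_mul_marg_pick_div (hsub : IsSubmodular v) (hmono : Monotone v)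
    (hb : ∀ i, 0 < b i) {B : ℝ} (hB : 0 ≤ B) (A S : Finset ι) :
    optVal v b B A ≤ v S + B * (marg v S (pick v b S) / b (pick v b S)) := by
  set ρ := marg v S (pick v b S) / b (pick v b S)
  have hρ : 0 ≤ ρ := div_nonneg (marg_nonneg hmono _ _) (hb _).le
  have h_marg : ∀ j, marg v S j ≤ b j * ρ := by
    intro j
    by_cases hj : j ∈ S
    · rw [marg_eq_zero_of_mem hj]
      exact mul_nonneg (hb j).le hρ
    · exact (div_le_iff₀' (hb j)).1 (marg_div_le_marg_pick_div hj)
  refine optVal_le hB fun T _ hTB => ?_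
  calc v T ≤ v (S ∪ T) := hmono Finset.subset_union_right
    _ ≤ v S + ∑ j ∈ T, marg v S j := hsub.map_union_le_add_sum_marg S T
    _ ≤ v S + ∑ j ∈ T, b j * ρ := by
      gcongr with j
      exact h_marg j
    _ = v S + (∑ j ∈ T, b j) * ρ := by rw [Finset.sum_mul]
    _ ≤ v S + B * ρ := by gcongr

theorem optVal_le_of_threshold_lt (hsub : IsSubmodular v) (hmono : Monotone v) (hv : 0 ≤ v ∅)
    (hb : ∀ i, 0 < b i) {B γ : ℝ} (hB : 0 ≤ B) (hγ : 0 < γ) (A : Finset ι) {S : Finset ι}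
    (h : γ * B * marg v S (pick v b S) < b (pick v b S) * v (insert (pick v b S) S)) :
    optVal v b B A ≤ (1 + γ⁻¹) * v S + γ⁻¹ * v {pick v b S} := by
  set p := pick v b S
  have h_ratio : B * (marg v S p / b p) ≤ γ⁻¹ * v (insert p S) := by
    rw [← mul_div_assoc, div_le_iff₀ (hb p), mul_assoc, le_inv_mul_iff₀ hγ]
    linarith
  calc optVal v b B A ≤ v S + B * (marg v S p / b p) :=
        optVal_le_add_mul_marg_pick_div hsub hmono hb hB A S
    _ ≤ v S + γ⁻¹ * (v S + v {p}) := by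
      grw [h_ratio, hsub.map_insert_le hmono hv]
    _ = (1 + γ⁻¹) * v S + γ⁻¹ * v {p} := by ring

end Greedy

section Mechanisms

variable {ι : Type*} [Fintype ι] [LinearOrder ι] [Nonempty ι] {v : Finset ι → ℝ} {b : ι → ℝ}

theorem greedyTM_eq_univ_or_exists_threshold_lt (v : Finset ι → ℝ) (B γ : ℝ) (b : ι → ℝ) :
    greedyTM v B γ b = Finset.univ ∨
      ∃ t < Fintype.card ι, greedyTM v B γ b = greedySet v b t ∧
        γ * B * marg v (greedySet v b t) (agent v b (t + 1)) <
          b (agent v b (t + 1)) * v (greedySet v b (t + 1)) := by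
  rw [greedyTM]
  split_ifs with h
  · obtain ⟨⟨h_pos, h_le⟩, h_lt⟩ := Nat.find_spec h
    refine .inr ⟨Nat.find h - 1, by lia, rfl, ?_⟩
    rwa [Nat.sub_add_cancel h_pos]
  · exact .inl rfl

theorem exists_greedyTM_eq_greedySet (v : Finset ι → ℝ) (B γ : ℝ) (b : ι → ℝ) :
    ∃ t ≤ Fintype.card ι, greedyTM v B γ b = greedySet v b t := by
  obtain h_univ | ⟨t, ht, h_eq, -⟩ := greedyTM_eq_univ_or_exists_threshold_lt v B γ b
  · exact ⟨_, le_rfl, h_univ.trans greedySet_card.symm⟩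
  · exact ⟨t, ht.le, h_eq⟩

theorem optVal_le_greedyTM (hsub : IsSubmodular v) (hmono : Monotone v) (hv : 0 ≤ v ∅)
    (hb : ∀ i, 0 < b i) {B γ M : ℝ} (hB : 0 ≤ B) (hγ : 0 < γ) (hM : ∀ j, v {j} ≤ M)
    (A : Finset ι) : optVal v b B A ≤ (1 + γ⁻¹) * v (greedyTM v B γ b) + γ⁻¹ * M := by
  have hv_nonneg : ∀ S, 0 ≤ v S := map_nonneg_of_monotone hmono hv
  obtain h_univ | ⟨t, -, h_eq, h_lt⟩ := greedyTM_eq_univ_or_exists_threshold_lt v B γ b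
  · have hM_nonneg : 0 ≤ M := (hv_nonneg _).trans (hM (Classical.arbitrary ι))
    rw [h_univ]
    calc optVal v b B A ≤ v A := optVal_le_map hmono hB
      _ ≤ v Finset.univ := hmono A.subset_univ
      _ ≤ v Finset.univ + γ⁻¹ * (v Finset.univ + M) :=
        le_add_of_nonneg_right
          (mul_nonneg (inv_pos.2 hγ).le (add_nonneg (hv_nonneg _) hM_nonneg))
      _ = (1 + γ⁻¹) * v Finset.univ + γ⁻¹ * M := by ring
  · rw [h_eq]
    grw [← hM (agent v b (t + 1))]
    exact optVal_le_of_threshold_lt hsub hmono hv hb hB hγ A h_lt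

theorem agent_mem_greedyOM {O : (ι → ℝ) → Finset ι → ℝ} {α : ℝ} {t : ℕ} (ht_pos : 1 ≤ t)
    (ht_le : t ≤ Fintype.card ι)
    (h : v (greedySet v b t) ≤ α * O b (Finset.univ.erase (agent v b t))) :
    agent v b t ∈ greedyOM v O α b :=
  Finset.mem_image_of_mem _ (Finset.mem_filter.2 ⟨Finset.mem_Icc.2 ⟨ht_pos, ht_le⟩, h⟩)

theorem greedySet_subset_greedyOM_or_exists_oracle_lt (v : Finset ι → ℝ)
    (O : (ι → ℝ) → Finset ι → ℝ) (α : ℝ) (b : ι → ℝ) {t : ℕ} (ht : t ≤ Fintype.card ι) :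
    greedySet v b t ⊆ greedyOM v O α b ∨
      ∃ s < t, greedySet v b s ⊆ greedyOM v O α b ∧
        α * O b (Finset.univ.erase (agent v b (s + 1))) < v (greedySet v b (s + 1)) := by
  induction t with
  | zero => exact .inl (Finset.empty_subset _)
  | succ t ih =>
    obtain h_prefix | ⟨s, hs, h⟩ := ih (by lia)
    · obtain h_pass | h_fail := le_or_gt (v (greedySet v b (t + 1)))
        (α * O b (Finset.univ.erase (agent v b (t + 1))))
      · rw [greedySet_succ]
        exact .inl (Finset.insert_subset (agent_mem_greedyOM (by lia) ht h_pass) h_prefix)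
      · exact .inr ⟨t, by lia, h_prefix, h_fail⟩
    · exact .inr ⟨s, by lia, h⟩

/-- `K * α` plays the role of the approximation ratio of the oracle. -/
theorem deterministicLarge_main_general (hsub : IsSubmodular v) (hmono : Monotone v)
    (hv : 0 ≤ v ∅) (hb : ∀ i, 0 < b i) {B α γ K M : ℝ} (hB : 0 ≤ B) (hγ : 0 < γ)
    (hγK : 1 + γ⁻¹ ≤ K) {O : (ι → ℝ) → Finset ι → ℝ}
    (hO : ∀ i, optVal v b B (Finset.univ.erase i) ≤ K * α * O b (Finset.univ.erase i))
    (hM : ∀ j, v {j} ≤ M) :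
    optVal v b B Finset.univ ≤ K * v (greedyOM v O α b ∩ greedyTM v B γ b) + (K + 1) * M := by
  have hγ_inv : 0 < γ⁻¹ := inv_pos.2 hγ
  have hK : 0 ≤ K := by linarith
  obtain ⟨t, ht, hTM⟩ := exists_greedyTM_eq_greedySet v B γ b
  obtain h_prefix | ⟨s, hst, h_prefix, h_fail⟩ :=
    greedySet_subset_greedyOM_or_exists_oracle_lt v O α b ht
  · have hv_nonneg : ∀ S, 0 ≤ v S := map_nonneg_of_monotone hmono hv
    have hM_nonneg : 0 ≤ M := (hv_nonneg _).trans (hM (Classical.arbitrary ι))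
    rw [Finset.inter_eq_right.2 (hTM ▸ h_prefix)]
    calc optVal v b B Finset.univ ≤ (1 + γ⁻¹) * v (greedyTM v B γ b) + γ⁻¹ * M :=
          optVal_le_greedyTM hsub hmono hv hb hB hγ hM Finset.univ
      _ ≤ K * v (greedyTM v B γ b) + (K + 1) * M := by
        gcongr
        · exact hv_nonneg _
        · linarith
  · have h_subset : greedySet v b s ⊆ greedyOM v O α b ∩ greedyTM v B γ b :=
      Finset.subset_inter h_prefix (hTM ▸ greedySet_monotone hst.le)
    have h_erase : optVal v b B (Finset.univ.erase (agent v b (s + 1))) ≤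
        K * v (insert (agent v b (s + 1)) (greedySet v b s)) := by
      rw [← greedySet_succ]
      grw [hO, mul_assoc, h_fail]
    grw [← hmono h_subset, ← hM (agent v b (s + 1))]
    exact optVal_le_of_optVal_erase_le hsub hmono hv (fun i => (hb i).le) hB hK h_erase

end Mechanisms

/-- `Deterministic-Large(r/(r+1), 1/r)` with an `r`-approximation oracle
satisfies `(1+r)·v(S) + (r+2)·v({i*}) ≥ opt(A, B)` (Theorem 5.4). -/
theorem deterministicLarge_main {ι : Type*} [Fintype ι] [LinearOrder ι] [Nonempty ι]
    (v : Finset ι → ℝ) (hv0 : v (∅ : Finset ι) = 0)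
    (hvmono : ∀ S T : Finset ι, S ⊆ T → v S ≤ v T)
    (hvsub : ∀ S T : Finset ι, v (S ∪ T) + v (S ∩ T) ≤ v S + v T)
    (B : ℝ) (hB : 0 < B)
    (c : ι → ℝ) (hc : ∀ i, 0 < c i) (hcB : ∀ i, c i ≤ B)
    (r : ℝ) (hr : 1 ≤ r)
    (O : (ι → ℝ) → Finset ι → ℝ)
    (hO : ∀ A' : Finset ι, O c A' ≤ optVal v c B A' ∧ optVal v c B A' ≤ r * O c A')
    (istar : ι) (histar : ∀ j : ι, v {j} ≤ v {istar}) :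
    (1 + r) * v (greedyOM v O (r / (r + 1)) c ∩ greedyTM v B (1 / r) c) +
        (r + 2) * v {istar} ≥
      optVal v c B Finset.univ := by
  have hα : (1 + r) * (r / (r + 1)) = r := by field_simp; ring
  linarith [deterministicLarge_main_general (K := 1 + r) hvsub hvmono hv0.ge hc hB.le
    (one_div_pos.2 (zero_lt_one.trans_le hr)) (by simp) (fun i => hα.symm ▸ (hO _).2) histar]
end

section
/- Let A and T be finite sets, let E ⊆ A × T be a set of edges of a bipartite graph, and let w : E → ℝ assign a nonnegative weight to each edge. For S ⊆ A define f(S) as the maximum of Σ_{e∈M} w(e) over all matchings M ⊆ E ∩ (S × T). Then f is monotone (f(S) ≤ f(S') whenever S ⊆ S' ⊆ A) and submodular (f(S) + f(S') ≥ f(S ∪ S') + f(S ∩ S') for all S, S' ⊆ A). -/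
open Classical

/-- `M` is a matching of a bipartite graph (with vertex sides `A` and `T`): no two distinct
edges of `M` share a first coordinate, and no two distinct edges share a second coordinate. -/
def IsMatching {A T : Type*} (M : Finset (A × T)) : Prop :=
  (∀ e ∈ M, ∀ e' ∈ M, e.1 = e'.1 → e = e') ∧
  (∀ e ∈ M, ∀ e' ∈ M, e.2 = e'.2 → e = e')

/-- `matchVal E w S` is the maximum of `∑_{e ∈ M} w e` over all matchings `M ⊆ E` whose
edges all have their first coordinate (agent endpoint) in `S`. -/
noncomputable def matchVal {A T : Type*} (E : Finset (A × T)) (w : A × T → ℝ)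
    (S : Finset A) : ℝ :=
  sSup ((fun M => ∑ e ∈ M, w e) ''
    {M : Finset (A × T) | M ⊆ E ∧ IsMatching M ∧ ∀ e ∈ M, e.1 ∈ S})

/-!
Let `M` and `N` be optimal matchings for `S ∪ S'` and `S ∩ S'`. In `M ∪ N`, follow the alternating
paths that start at the agents of `S \ S'` with an edge of `M`. Every later agent on such a path is
covered by `N`, hence lies in `S ∩ S'`, so the set `R` of agents reached lies in `S` and contains
`S \ S'`. An `M`-edge and an `N`-edge at a common task have both their agents in `R` or both outside
`R`. Therefore exchanging `M` and `N` on `R` yields two matchings, one induced by `S` and one by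
`S'`, with the same total weight.
-/

section Matching

variable {A T : Type*} {M N : Finset (A × T)}

theorem IsMatching.subset (hM : IsMatching M) (h : N ⊆ M) : IsMatching N :=
  ⟨fun e he e' he' => hM.1 e (h he) e' (h he'), fun e he e' he' => hM.2 e (h he) e' (h he')⟩

theorem isMatching_empty : IsMatching (∅ : Finset (A × T)) := by
  simp [IsMatching]

theorem IsMatching.union [DecidableEq (A × T)] (hM : IsMatching M) (hN : IsMatching N)
    (hfst : ∀ e ∈ M, ∀ e' ∈ N, e.1 ≠ e'.1) (hsnd : ∀ e ∈ M, ∀ e' ∈ N, e.2 ≠ e'.2) :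
    IsMatching (M ∪ N) := by
  constructor <;> intro e he e' he' heq <;>
    rcases Finset.mem_union.1 he with heM | heN <;>
    rcases Finset.mem_union.1 he' with heM' | heN'
  · exact hM.1 e heM e' heM' heq
  · exact absurd heq (hfst e heM e' heN')
  · exact absurd heq.symm (hfst e' heM' e heN)
  · exact hN.1 e heN e' heN' heq
  · exact hM.2 e heM e' heM' heq
  · exact absurd heq (hsnd e heM e' heN')
  · exact absurd heq.symm (hsnd e' heM' e heN)
  · exact hN.2 e heN e' heN' heq

end Matching

section AlternatingPaths

variable {A T : Type*} {M N : Finset (A × T)} {D : Set A} {a b c : A}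

/-- Two consecutive edges of an alternating path: from the agent `a` along an edge of `M` to a task,
and from there along an edge of `N` to the agent `b`. -/
def AlternatingStep (M N : Finset (A × T)) (a b : A) : Prop :=
  ∃ t, (a, t) ∈ M ∧ (b, t) ∈ N

theorem AlternatingStep.symm (h : AlternatingStep M N a b) : AlternatingStep N M b a :=
  let ⟨t, hM, hN⟩ := h
  ⟨t, hN, hM⟩

theorem AlternatingStep.left_unique (hM : IsMatching M) (hN : IsMatching N)
    (ha : AlternatingStep M N a c) (hb : AlternatingStep M N b c) : a = b := by
  obtain ⟨t, hat, hct⟩ := ha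
  obtain ⟨u, hbu, hcu⟩ := hb
  obtain rfl : t = u := congrArg Prod.snd (hN.1 _ hct _ hcu rfl)
  exact congrArg Prod.fst (hM.2 _ hat _ hbu rfl)

/-- The agents at the ends of the alternating paths that start in `D` with an edge of `M` and
finish with an edge of `N`, together with `D` itself (the paths of length zero). -/
def alternatingReach (M N : Finset (A × T)) (D : Set A) : Set A :=
  {b | ∃ a ∈ D, Relation.ReflTransGen (AlternatingStep M N) a b}

theorem subset_alternatingReach : D ⊆ alternatingReach M N D :=
  fun a ha => ⟨a, ha, .refl⟩

theorem AlternatingStep.mem_alternatingReach (h : AlternatingStep M N a b)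
    (ha : a ∈ alternatingReach M N D) : b ∈ alternatingReach M N D :=
  let ⟨s, hs, hsa⟩ := ha
  ⟨s, hs, hsa.tail h⟩

theorem mem_or_exists_of_mem_alternatingReach (hb : b ∈ alternatingReach M N D) :
    b ∈ D ∨ ∃ a ∈ alternatingReach M N D, AlternatingStep M N a b := by
  obtain ⟨s, hs, hsb⟩ := hb
  rcases hsb.cases_tail with rfl | ⟨a, hsa, hab⟩
  · exact .inl hs
  · exact .inr ⟨a, ⟨s, hs, hsa⟩, hab⟩

theorem alternatingReach_subset {U : Set A} (hD : D ⊆ U) (hN : ∀ e ∈ N, e.1 ∈ U) :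
    alternatingReach M N D ⊆ U := by
  intro b hb
  rcases mem_or_exists_of_mem_alternatingReach hb with hb | ⟨-, -, t, -, hbt⟩
  · exact hD hb
  · exact hN _ hbt

theorem AlternatingStep.mem_alternatingReach_iff (hM : IsMatching M) (hN : IsMatching N)
    (hD : ∀ e ∈ N, e.1 ∉ D) (h : AlternatingStep M N a b) :
    a ∈ alternatingReach M N D ↔ b ∈ alternatingReach M N D := by
  refine ⟨h.mem_alternatingReach, fun hb => ?_⟩
  rcases mem_or_exists_of_mem_alternatingReach hb with hbD | ⟨c, hc, hcb⟩
  · obtain ⟨t, -, hbt⟩ := h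
    exact absurd hbD (hD _ hbt)
  · rwa [h.left_unique hM hN hcb]

end AlternatingPaths

section Splice

variable {A T : Type*} {R : Set A} {M N : Finset (A × T)}

/-- The edge set that agrees with `M` at the agents in `R` and with `N` at all other agents.
Exchanging `M` and `N` on `R` replaces them by `splice R N M` and `splice R M N`. -/
noncomputable def splice (R : Set A) (M N : Finset (A × T)) : Finset (A × T) :=
  {e ∈ M | e.1 ∈ R} ∪ {e ∈ N | e.1 ∉ R}

theorem mem_splice {e : A × T} : e ∈ splice R M N ↔ e ∈ M ∧ e.1 ∈ R ∨ e ∈ N ∧ e.1 ∉ R := by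
  simp only [splice, Finset.mem_union, Finset.mem_filter]

theorem sum_splice {β : Type*} [AddCommMonoid β] (R : Set A) (M N : Finset (A × T))
    (w : A × T → β) :
    ∑ e ∈ splice R M N, w e = ∑ e ∈ M with e.1 ∈ R, w e + ∑ e ∈ N with e.1 ∉ R, w e :=
  Finset.sum_union <| Finset.disjoint_left.2 fun _ hM hN =>
    (Finset.mem_filter.1 hN).2 (Finset.mem_filter.1 hM).2

theorem sum_splice_add_sum_splice {β : Type*} [AddCommMonoid β] (R : Set A)
    (M N : Finset (A × T)) (w : A × T → β) :
    ∑ e ∈ splice R M N, w e + ∑ e ∈ splice R N M, w e = ∑ e ∈ M, w e + ∑ e ∈ N, w e := by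
  rw [sum_splice, sum_splice, ← Finset.sum_filter_add_sum_filter_not M (·.1 ∈ R),
    ← Finset.sum_filter_add_sum_filter_not N (·.1 ∈ R)]
  abel

theorem IsMatching.splice (hM : IsMatching M) (hN : IsMatching N)
    (hR : ∀ a b, AlternatingStep M N a b → a ∈ R → b ∈ R) : IsMatching (splice R M N) := by
  refine (hM.subset (Finset.filter_subset _ M)).union
    (hN.subset (Finset.filter_subset _ N)) ?_ ?_ <;>
    intro e he e' he' heq <;>
    obtain ⟨heM, heR⟩ := Finset.mem_filter.1 he <;>
    obtain ⟨heN, heR'⟩ := Finset.mem_filter.1 he'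
  · exact heR' (heq ▸ heR)
  · exact heR' (hR e.1 e'.1 ⟨e.2, heM, heq ▸ heN⟩ heR)

end Splice

section InducedMatching

variable {A T : Type*} {E M N : Finset (A × T)} {S S₁ S₂ : Finset A}

/-- `M` is a matching induced by the set of agents `S` in the bipartite graph with edge set `E`. The
conjuncts are those in the definition of `matchVal`, so that `matchVal` unfolds to a supremum over
induced matchings. -/
def IsInducedMatching (E : Finset (A × T)) (S : Finset A) (M : Finset (A × T)) : Prop :=
  M ⊆ E ∧ IsMatching M ∧ ∀ e ∈ M, e.1 ∈ S

theorem IsInducedMatching.mono (hM : IsInducedMatching E S₁ M) (h : S₁ ⊆ S₂) :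
    IsInducedMatching E S₂ M :=
  ⟨hM.1, hM.2.1, fun e he => h (hM.2.2 e he)⟩

theorem isInducedMatching_empty (E : Finset (A × T)) (S : Finset A) :
    IsInducedMatching E S ∅ :=
  ⟨Finset.empty_subset E, isMatching_empty, by simp⟩

theorem finite_setOf_isInducedMatching (E : Finset (A × T)) (S : Finset A) :
    {M | IsInducedMatching E S M}.Finite :=
  E.powerset.finite_toSet.subset fun _ hM => Finset.mem_powerset.2 hM.1

theorem IsInducedMatching.splice {R : Set A} (hM : IsInducedMatching E S₁ M)
    (hN : IsInducedMatching E S₂ N) (hR : ∀ a b, AlternatingStep M N a b → a ∈ R → b ∈ R)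
    (hS₁ : ∀ a ∈ S₁, a ∈ R → a ∈ S) (hS₂ : ∀ a ∈ S₂, a ∉ R → a ∈ S) :
    IsInducedMatching E S (splice R M N) := by
  obtain ⟨hME, hM, hMS⟩ := hM
  obtain ⟨hNE, hN, hNS⟩ := hN
  refine ⟨fun e he => ?_, hM.splice hN hR, fun e he => ?_⟩ <;>
    rcases mem_splice.1 he with ⟨heM, heR⟩ | ⟨heN, heR⟩
  · exact hME heM
  · exact hNE heN
  · exact hS₁ _ (hMS e heM) heR
  · exact hS₂ _ (hNS e heN) heR

theorem exists_isInducedMatching_splice [DecidableEq A]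
    (hM : IsInducedMatching E (S₁ ∪ S₂) M) (hN : IsInducedMatching E (S₁ ∩ S₂) N) :
    ∃ R : Set A, IsInducedMatching E S₁ (splice R M N) ∧
      IsInducedMatching E S₂ (splice R N M) := by
  let R := alternatingReach M N (S₁ \ S₂)
  have step_iff : ∀ a b, AlternatingStep M N a b → (a ∈ R ↔ b ∈ R) := fun a b h =>
    h.mem_alternatingReach_iff hM.2.1 hN.2.1 fun e he heD =>
      heD.2 (Finset.mem_of_mem_inter_right (hN.2.2 e he))
  have R_subset : R ⊆ S₁ := alternatingReach_subset Set.sdiff_subset fun e he =>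
    Finset.mem_of_mem_inter_left (hN.2.2 e he)
  have mem_of_notMem_R : ∀ a ∈ S₁ ∪ S₂, a ∉ R → a ∈ S₂ := fun a ha haR => by
    by_contra haS₂
    have haS₁ : a ∈ S₁ := (Finset.mem_union.1 ha).resolve_right haS₂
    exact haR (subset_alternatingReach ⟨haS₁, haS₂⟩)
  exact ⟨R,
    hM.splice hN (fun a b h => (step_iff a b h).1) (fun _ _ ha => R_subset ha)
      (fun _ ha _ => Finset.mem_of_mem_inter_left ha),
    hN.splice hM (fun a b h => (step_iff b a h.symm).2)
      (fun _ ha _ => Finset.mem_of_mem_inter_right ha) mem_of_notMem_R⟩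

end InducedMatching

section MatchVal

variable {A T : Type*} (E : Finset (A × T)) (w : A × T → ℝ)

theorem isGreatest_matchVal (S : Finset A) :
    IsGreatest ((fun M => ∑ e ∈ M, w e) '' {M | IsInducedMatching E S M}) (matchVal E w S) :=
  have hfin := (finite_setOf_isInducedMatching E S).image fun M => ∑ e ∈ M, w e
  have hne := Set.Nonempty.image (fun M => ∑ e ∈ M, w e) ⟨∅, isInducedMatching_empty E S⟩
  ⟨hne.csSup_mem hfin, fun _ hx => le_csSup hfin.bddAbove hx⟩

theorem exists_isInducedMatching_sum_eq_matchVal (S : Finset A) :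
    ∃ M, IsInducedMatching E S M ∧ ∑ e ∈ M, w e = matchVal E w S :=
  (isGreatest_matchVal E w S).1

variable {E} in
theorem IsInducedMatching.sum_le_matchVal {S : Finset A} {M : Finset (A × T)}
    (hM : IsInducedMatching E S M) : ∑ e ∈ M, w e ≤ matchVal E w S :=
  (isGreatest_matchVal E w S).2 ⟨M, hM, rfl⟩

theorem matchVal_mono : Monotone (matchVal E w) := by
  intro S S' h
  obtain ⟨M, hM, hMw⟩ := exists_isInducedMatching_sum_eq_matchVal E w S
  exact hMw ▸ (hM.mono h).sum_le_matchVal w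

theorem matchVal_union_add_matchVal_inter_le [DecidableEq A] (S S' : Finset A) :
    matchVal E w (S ∪ S') + matchVal E w (S ∩ S') ≤ matchVal E w S + matchVal E w S' := by
  obtain ⟨M, hM, hMw⟩ := exists_isInducedMatching_sum_eq_matchVal E w (S ∪ S')
  obtain ⟨N, hN, hNw⟩ := exists_isInducedMatching_sum_eq_matchVal E w (S ∩ S')
  obtain ⟨R, hS, hS'⟩ := exists_isInducedMatching_splice hM hN
  calc
    matchVal E w (S ∪ S') + matchVal E w (S ∩ S') = ∑ e ∈ M, w e + ∑ e ∈ N, w e := by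
      rw [hMw, hNw]
    _ = ∑ e ∈ splice R M N, w e + ∑ e ∈ splice R N M, w e :=
      (sum_splice_add_sum_splice R M N w).symm
    _ ≤ matchVal E w S + matchVal E w S' :=
      add_le_add (hS.sum_le_matchVal w) (hS'.sum_le_matchVal w)

theorem matchVal_monotone_submodular_general [DecidableEq A] :
    Monotone (matchVal E w) ∧
    (∀ S S' : Finset A,
      matchVal E w (S ∪ S') + matchVal E w (S ∩ S') ≤ matchVal E w S + matchVal E w S') :=
  ⟨matchVal_mono E w, matchVal_union_add_matchVal_inter_le E w⟩

end MatchVal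

/-- the maximum weight of a matching induced by a set of agents `S` is a
monotone submodular function of `S` (Proposition 6.1). -/
theorem matchVal_monotone_submodular {A T : Type*} [Fintype A] [Fintype T]
    [DecidableEq A] [DecidableEq T]
    (E : Finset (A × T)) (w : A × T → ℝ) (hw : ∀ e ∈ E, 0 ≤ w e) :
    (∀ S S' : Finset A, S ⊆ S' → matchVal E w S ≤ matchVal E w S') ∧
    (∀ S S' : Finset A,
      matchVal E w (S ∪ S') + matchVal E w (S ∩ S') ≤ matchVal E w S + matchVal E w S') :=
  ⟨fun _ _ h => (matchVal_monotone_submodular_general E w).1 h,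
    (matchVal_monotone_submodular_general E w).2⟩
end
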